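/- arXiv:2507.00934 — 3 statements merged into one kernel-verified Lean document; each statement's English description precedes it below -/
import Mathlib

section
/- Let G = GO₄⁺(3) be the group of 4×4 matrices M over 𝔽₃ = ℤ/3ℤ with Mᵀ·M = 1, and let PGO₄⁺(3) be the quotient of G by its center. Then PGO₄⁺(3) contains no element of order 8: every element of G ⧸ Z(G) has order different from 8. -/
attribute [local instance] starRingOfComm

set_option maxHeartbeats 8000000 in
theorem key_comm {R : Type*} [CommRing R] [CharP R 3] (m e : R) (he : e = 1 ∨ e = -1)
    (h8 : m^8 = e)
    (a b c d : R) (ha : a = 0 ∨ a = 1 ∨ a = -1) (hb : b = 0 ∨ b = 1 ∨ b = -1)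
    (hc : c = 0 ∨ c = 1 ∨ c = -1) (hd : d = 0 ∨ d = 1 ∨ d = -1)
    (h1 : d + c * m + b * m^2 + a * m^3 + m^4 = 0)
    (h2 : d * m^4 + c * m^3 + b * m^2 + a * m + 1 = 0) : m^4 = 1 ∨ m^4 = -1 := by
  rcases he with rfl | rfl <;> rcases ha with rfl | rfl | rfl <;>
    rcases hb with rfl | rfl | rfl <;> rcases hc with rfl | rfl | rfl <;>
    rcases hd with rfl | rfl | rfl <;> first | (left; grind) | (right; grind)

open Polynomial in
theorem key_alg {S : Type*} [Ring S] [Nontrivial S] [Algebra (ZMod 3) S] (m : S)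
    (h8 : m^8 = 1 ∨ m^8 = -1) (a b c d : ZMod 3)
    (h1 : d • 1 + c • m + b • m^2 + a • m^3 + m^4 = 0)
    (h2 : d • m^4 + c • m^3 + b • m^2 + a • m + 1 = 0) : m^4 = 1 ∨ m^4 = -1 := by
  let φ : (ZMod 3)[X] →+* S := (aeval m : (ZMod 3)[X] →ₐ[ZMod 3] S).toRingHom
  let R := (ZMod 3)[X] ⧸ RingHom.ker φ
  let ψ : R →+* S := RingHom.kerLift φ
  have hψ : Function.Injective ψ := RingHom.kerLift_injective φ
  have : Nontrivial R := ψ.domain_nontrivial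
  have : CharP R 3 := charP_of_injective_algebraMap (algebraMap (ZMod 3) R).injective 3
  let x : R := Ideal.Quotient.mk _ X
  have hx : ψ x = m := by
    change φ X = m
    simp [φ]
  have hC : ∀ z : ZMod 3, ψ (algebraMap (ZMod 3) R z) = algebraMap (ZMod 3) S z := by
    intro z
    change φ (C z) = _
    simp [φ]
  have hz : ∀ z : ZMod 3, algebraMap (ZMod 3) R z = 0 ∨ algebraMap (ZMod 3) R z = 1 ∨
      algebraMap (ZMod 3) R z = -1 := by
    intro z
    have : z = 0 ∨ z = 1 ∨ z = -1 := by revert z; decide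
    rcases this with rfl | rfl | rfl <;> simp
  have h8' : ∃ e : R, (e = 1 ∨ e = -1) ∧ x^8 = e := by
    rcases h8 with h | h
    · exact ⟨1, Or.inl rfl, hψ (by simp [hx, h])⟩
    · exact ⟨-1, Or.inr rfl, hψ (by simp [hx, h])⟩
  obtain ⟨e, he, h8e⟩ := h8'
  have := key_comm x e he h8e _ _ _ _ (hz a) (hz b) (hz c) (hz d)
    (hψ (by simpa [hx, hC, Algebra.smul_def] using h1))
    (hψ (by simpa [hx, hC, Algebra.smul_def] using h2))
  rcases this with h | h
  · left; simpa [hx] using congrArg ψ h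
  · right; simpa [hx] using congrArg ψ h

theorem key_mat (M : Matrix (Fin 4) (Fin 4) (ZMod 3)) (hM : M.transpose * M = 1)
    (h8 : M^8 = 1 ∨ M^8 = -1) : M^4 = 1 ∨ M^4 = -1 := by
  have hM' : M * M.transpose = 1 := mul_eq_one_comm.mp hM
  have hdeg : M.charpoly.natDegree = 4 := by simp [Matrix.charpoly_natDegree_eq_dim]
  have hlead : M.charpoly.coeff 4 = 1 := by
    have := M.charpoly_monic.coeff_natDegree
    rwa [hdeg] at this
  have hCH := M.aeval_self_charpoly
  rw [Polynomial.aeval_eq_sum_range, hdeg] at hCH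
  simp only [Finset.sum_range_succ, Finset.sum_range_zero, hlead, zero_add, one_smul, pow_zero,
    pow_one] at hCH
  refine key_alg M h8 _ _ _ _ hCH ?_
  have hT := congrArg Matrix.transpose hCH
  simp only [Matrix.transpose_add, Matrix.transpose_smul, Matrix.transpose_pow,
    Matrix.transpose_one, Matrix.transpose_zero] at hT
  have e1 : M.transpose * M^4 = M^3 := by rw [pow_succ' M 3, ← mul_assoc, hM, one_mul]
  have e1' : M.transpose * M^3 = M^2 := by rw [pow_succ' M 2, ← mul_assoc, hM, one_mul]
  have e1'' : M.transpose * M^2 = M := by rw [pow_succ' M 1, ← mul_assoc, hM, one_mul, pow_one]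
  have e2 : M.transpose^2 * M^4 = M^2 := by rw [pow_succ, mul_assoc, e1, pow_one, e1']
  have e3 : M.transpose^3 * M^4 = M := by
    rw [pow_succ, mul_assoc, e1, pow_succ, mul_assoc, e1', pow_one, e1'']
  have e4 : M.transpose^4 * M^4 = 1 := by rw [pow_succ', mul_assoc, e3, hM]
  have := congrArg (· * M^4) hT
  simpa only [add_mul, smul_mul_assoc, e1, e2, e3, e4, one_mul, zero_mul] using this

theorem center_pm (z : Matrix.orthogonalGroup (Fin 4) (ZMod 3))
    (hz : z ∈ Subgroup.center (Matrix.orthogonalGroup (Fin 4) (ZMod 3))) :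
    z.1 = 1 ∨ z.1 = -1 := by
  rw [Subgroup.mem_center_iff] at hz
  have hc : ∀ A : Matrix (Fin 4) (Fin 4) (ZMod 3), A * A.transpose = 1 → A * z.1 = z.1 * A :=
    fun A hA => congrArg Subtype.val (hz ⟨A, (Matrix.mem_orthogonalGroup_iff _ _).mpr hA⟩)
  have d0 := hc !![-1,0,0,0;0,1,0,0;0,0,1,0;0,0,0,1] (by decide)
  have d1 := hc !![1,0,0,0;0,-1,0,0;0,0,1,0;0,0,0,1] (by decide)
  have d2 := hc !![1,0,0,0;0,1,0,0;0,0,-1,0;0,0,0,1] (by decide)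
  have p := hc !![0,1,0,0;0,0,1,0;0,0,0,1;1,0,0,0] (by decide)
  have hzz : z.1 * z.1.transpose = 1 := (Matrix.mem_orthogonalGroup_iff _ _).mp z.2
  generalize z.1 = Z at *
  have hneg : ∀ t : ZMod 3, -t = t → t = 0 := by decide
  have hneg' : ∀ t : ZMod 3, t = -t → t = 0 := by decide
  have hsq : ∀ t : ZMod 3, t * t = 1 → t = 1 ∨ t = -1 := by decide
  have k : ∀ i j, i ≠ j → Z i j = 0 := by
    intro i j hij
    have a0 := congrFun (congrFun d0 i) j
    have a1 := congrFun (congrFun d1 i) j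
    have a2 := congrFun (congrFun d2 i) j
    fin_cases i <;> fin_cases j <;> first | exact absurd rfl hij | skip
    all_goals
      simp [Matrix.mul_apply, Fin.sum_univ_four] at a0 a1 a2 ⊢
      first
      | exact hneg _ a0 | exact hneg _ a1 | exact hneg _ a2
      | exact hneg' _ a0 | exact hneg' _ a1 | exact hneg' _ a2
  have q0 : Z 1 1 = Z 0 0 := by
    simpa [Matrix.mul_apply, Fin.sum_univ_four] using congrFun (congrFun p 0) 1
  have q1 : Z 2 2 = Z 1 1 := by
    simpa [Matrix.mul_apply, Fin.sum_univ_four] using congrFun (congrFun p 1) 2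
  have q2 : Z 3 3 = Z 2 2 := by
    simpa [Matrix.mul_apply, Fin.sum_univ_four] using congrFun (congrFun p 2) 3
  have hs : Z 0 0 * Z 0 0 = 1 := by
    simpa [Matrix.mul_apply, Fin.sum_univ_four, k] using congrFun (congrFun hzz 0) 0
  rcases hsq _ hs with h | h
  · left; ext i j
    fin_cases i <;> fin_cases j <;> simp [k, q0, q1, q2, h]
  · right; ext i j
    fin_cases i <;> fin_cases j <;> simp [k, q0, q1, q2, h]

theorem mem_center_pm (z : Matrix.orthogonalGroup (Fin 4) (ZMod 3))
    (hz : z.1 = 1 ∨ z.1 = -1) :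
    z ∈ Subgroup.center (Matrix.orthogonalGroup (Fin 4) (ZMod 3)) := by
  rw [Subgroup.mem_center_iff]
  intro g
  apply Subtype.ext
  change g.1 * z.1 = z.1 * g.1
  rcases hz with h | h <;> simp [h]

/-- `PGO₄⁺(3)`, the quotient of `GO₄⁺(3)` (the 4×4 matrices `M` over `𝔽₃` with `Mᵀ·M = 1`)
by its center, contains no element of order 8. -/
theorem PGO4_plus_3_no_element_of_order_eight :
    ∀ x : (Matrix.orthogonalGroup (Fin 4) (ZMod 3)) ⧸
      Subgroup.center (Matrix.orthogonalGroup (Fin 4) (ZMod 3)), orderOf x ≠ 8 := by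
  intro x hx
  induction x using QuotientGroup.induction_on with
  | H g =>
    have h8 := pow_orderOf_eq_one (g : Matrix.orthogonalGroup (Fin 4) (ZMod 3) ⧸
      Subgroup.center (Matrix.orthogonalGroup (Fin 4) (ZMod 3)))
    rw [hx, ← QuotientGroup.mk_pow, QuotientGroup.eq_one_iff] at h8
    have h4 := key_mat g.1 ((Matrix.mem_orthogonalGroup_iff' _ _).mp g.2) (center_pm _ h8)
    have h4' := (QuotientGroup.eq_one_iff _).mpr (mem_center_pm (g^4) h4)
    rw [QuotientGroup.mk_pow] at h4'
    have := orderOf_dvd_of_pow_eq_one h4'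
    rw [hx] at this
    revert this
    decide
end

section
/- Let P = PGO₄⁺(3) be the quotient of GO₄⁺(3) (the group of 4×4 matrices M over 𝔽₃ with Mᵀ·M = 1) by its center. Then P is an (internal) semidirect product (C₂)⁴ ⋊ (𝔖₃ × 𝔖₃): there exist a normal subgroup N of P isomorphic to (ℤ/2ℤ)⁴ and a subgroup H of P isomorphic to 𝔖₃ × 𝔖₃ such that N ∩ H is trivial and N and H together generate P. -/
attribute [local instance] starRingOfComm

namespace PGOAux

abbrev V := Fin 4 → ZMod 3
abbrev G := Matrix.orthogonalGroup (Fin 4) (ZMod 3)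
abbrev Mat := Matrix (Fin 4) (Fin 4) (ZMod 3)

open Matrix

lemma mem_iff (A : Mat) : A ∈ Matrix.orthogonalGroup (Fin 4) (ZMod 3) ↔ Aᵀ * A = 1 := by
  rw [Matrix.mem_orthogonalGroup_iff']

lemma dot_pres (M : G) (u v : V) : (M.1 *ᵥ u) ⬝ᵥ (M.1 *ᵥ v) = u ⬝ᵥ v := by
  have h := (mem_iff M.1).1 M.2
  rw [Matrix.dotProduct_mulVec, Matrix.vecMul_mulVec, ← Matrix.dotProduct_mulVec, h, Matrix.one_mulVec]

/-- A colouring of the vectors of given norm by three orthogonal frames. -/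
structure Colouring where
  n : ZMod 3
  col : V → ZMod 3
  rep : ZMod 3 → V
  h1 : ∀ i, rep i ⬝ᵥ rep i = n
  h2 : ∀ i, col (rep i) = i
  h3 : ∀ u v : V, u ⬝ᵥ u = n → v ⬝ᵥ v = n → (col u = col v ↔ (u ⬝ᵥ v = 0 ∨ u = v ∨ u = -v))

lemma Colouring.pres (C : Colouring) (M : G) (u v : V) (hu : u ⬝ᵥ u = C.n) (hv : v ⬝ᵥ v = C.n)
    (h : C.col u = C.col v) : C.col (M.1 *ᵥ u) = C.col (M.1 *ᵥ v) := by
  rw [C.h3 _ _ (by rw [dot_pres, hu]) (by rw [dot_pres, hv]), dot_pres]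
  rcases (C.h3 u v hu hv).1 h with h | h | h
  · exact Or.inl h
  · exact Or.inr (Or.inl (by rw [h]))
  · exact Or.inr (Or.inr (by rw [h, Matrix.mulVec_neg]))

/-- The action on the three frames. -/
def Colouring.toEnd (C : Colouring) : G →* Function.End (Fin 3) where
  toFun M := fun i => C.col (M.1 *ᵥ C.rep i)
  map_one' := by
    funext i
    change C.col ((1 : Mat) *ᵥ C.rep i) = i
    rw [Matrix.one_mulVec]
    exact C.h2 i
  map_mul' M N := by
    funext i
    change C.col ((M.1 * N.1) *ᵥ C.rep i) = C.col (M.1 *ᵥ C.rep (C.col (N.1 *ᵥ C.rep i)))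
    rw [← Matrix.mulVec_mulVec]
    apply C.pres
    · rw [dot_pres]
      exact C.h1 i
    · rw [C.h1]
    · rw [C.h2]

def Colouring.act (C : Colouring) : G →* Equiv.Perm (Fin 3) := C.toEnd.toHomPerm

lemma Colouring.act_apply (C : Colouring) (M : G) (i : Fin 3) :
    C.act M i = C.col (M.1 *ᵥ C.rep i) := rfl

/-- Product of the coordinates. -/
def pc (v : V) : ZMod 3 := v 0 * v 1 * v 2 * v 3
def pr (i : ZMod 3) : V := (![![1,0,0,0], ![1,1,1,1], ![1,-1,-1,-1]] : Fin 3 → V) i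
def qc (v : V) : ZMod 3 :=
  (v 0 * v 2 * (v 0 * v 2) + v 1 * v 3 * (v 1 * v 3))
    - (v 0 * v 3 * (v 0 * v 3) + v 1 * v 2 * (v 1 * v 2))
def qr (i : ZMod 3) : V := (![![1,1,0,0], ![1,0,1,0], ![1,0,0,1]] : Fin 3 → V) i

lemma forallV (P : V → Prop) (h : ∀ a b c d : ZMod 3, P ![a,b,c,d]) (v : V) : P v := by
  have := h (v 0) (v 1) (v 2) (v 3)
  have e : ![v 0, v 1, v 2, v 3] = v := by
    funext i; fin_cases i <;> rfl
  rwa [e] at this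

lemma p3 : ∀ u : V, u ⬝ᵥ u = 1 → ∀ v : V, v ⬝ᵥ v = 1 →
    (pc u = pc v ↔ (u ⬝ᵥ v = 0 ∨ u = v ∨ u = -v)) := by
  have : ∀ a b c d : ZMod 3, ![a,b,c,d] ⬝ᵥ ![a,b,c,d] = 1 →
      ∀ x y z w : ZMod 3, ![x,y,z,w] ⬝ᵥ ![x,y,z,w] = 1 →
      (pc ![a,b,c,d] = pc ![x,y,z,w] ↔ (![a,b,c,d] ⬝ᵥ ![x,y,z,w] = 0 ∨
        ![a,b,c,d] = ![x,y,z,w] ∨ ![a,b,c,d] = -![x,y,z,w])) := by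
    decide +kernel
  refine forallV _ fun a b c d h => forallV _ fun x y z w h' => this a b c d h x y z w h'

lemma q3 : ∀ u : V, u ⬝ᵥ u = 2 → ∀ v : V, v ⬝ᵥ v = 2 →
    (qc u = qc v ↔ (u ⬝ᵥ v = 0 ∨ u = v ∨ u = -v)) := by
  have : ∀ a b c d : ZMod 3, ![a,b,c,d] ⬝ᵥ ![a,b,c,d] = 2 →
      ∀ x y z w : ZMod 3, ![x,y,z,w] ⬝ᵥ ![x,y,z,w] = 2 →
      (qc ![a,b,c,d] = qc ![x,y,z,w] ↔ (![a,b,c,d] ⬝ᵥ ![x,y,z,w] = 0 ∨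
        ![a,b,c,d] = ![x,y,z,w] ∨ ![a,b,c,d] = -![x,y,z,w])) := by
    decide +kernel
  refine forallV _ fun a b c d h => forallV _ fun x y z w h' => this a b c d h x y z w h'

def PC : Colouring := ⟨1, pc, pr, by decide +kernel, by decide +kernel, fun u v hu hv => p3 u hu v hv⟩
def QC : Colouring := ⟨2, qc, qr, by decide +kernel, by decide +kernel, fun u v hu hv => q3 u hu v hv⟩

def φ : G →* Equiv.Perm (Fin 3) × Equiv.Perm (Fin 3) := PC.act.prod QC.act

/-- Reflection in a vector of norm one. -/
def R (k : ZMod 3) : Mat := Matrix.of fun i j => (if i = j then 1 else 0) + pr k i * pr k j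

def W (σ : Equiv.Perm (Fin 3)) : Mat :=
  if σ 0 = 0 then (if σ 1 = 1 then 1 else R 0)
  else if σ 1 = 1 then R 1
  else if σ 2 = 2 then R 2
  else if σ 0 = 1 then R 0 * R 1 else R 1 * R 0

def Pm (τ : Equiv.Perm (Fin 3)) : Mat := Matrix.of fun i j =>
  if i = (Fin.cons 0 (fun k => (τ k).succ) : Fin 4 → Fin 4) j then 1 else 0

def ψ1 : Equiv.Perm (Fin 3) →* G where
  toFun σ := ⟨W σ, (mem_iff _).2 (by revert σ; decide +kernel)⟩
  map_one' := Subtype.ext (by decide +kernel)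
  map_mul' σ τ := Subtype.ext (by
    change W (σ * τ) = W σ * W τ
    revert σ τ; decide +kernel)

def ψ2 : Equiv.Perm (Fin 3) →* G where
  toFun σ := ⟨Pm σ, (mem_iff _).2 (by revert σ; decide +kernel)⟩
  map_one' := Subtype.ext (by decide +kernel)
  map_mul' σ τ := Subtype.ext (by
    change Pm (σ * τ) = Pm σ * Pm τ
    revert σ τ; decide +kernel)

def ψ : Equiv.Perm (Fin 3) × Equiv.Perm (Fin 3) →* G :=
  MonoidHom.noncommCoprod ψ1 ψ2 (fun σ τ => Subtype.ext (by
    change W σ * Pm τ = Pm τ * W σ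
    revert σ τ; decide +kernel))

def toZ (i : Fin 3) : ZMod 3 := i

lemma sec1 : ∀ (σ τ : Equiv.Perm (Fin 3)) (i : Fin 3),
    pc ((W σ * Pm τ) *ᵥ pr (toZ i)) = toZ (σ i) := by decide +kernel

lemma sec2 : ∀ (σ τ : Equiv.Perm (Fin 3)) (i : Fin 3),
    qc ((W σ * Pm τ) *ᵥ qr (toZ i)) = toZ (τ i) := by decide +kernel

lemma φψ (x) : φ (ψ x) = x := by
  obtain ⟨σ, τ⟩ := x
  refine Prod.ext (Equiv.ext fun i => ?_) (Equiv.ext fun i => ?_)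
  · exact sec1 σ τ i
  · exact sec2 σ τ i

lemma center_le : Subgroup.center G ≤ φ.ker := by
  intro z hz
  rw [MonoidHom.mem_ker]
  have h : ∀ x, x * φ z = φ z * x := by
    intro x
    rw [← φψ x, ← map_mul, ← map_mul, Subgroup.mem_center_iff.1 hz]
  have key : ∀ σ : Equiv.Perm (Fin 3), (∀ τ, τ * σ = σ * τ) → σ = 1 := by decide +kernel
  refine Prod.ext (key _ fun τ => ?_) (key _ fun τ => ?_)
  · exact congrArg Prod.fst (h (τ, 1))
  · exact congrArg Prod.snd (h (1, τ))

abbrev E := Fin 4 → Multiplicative (ZMod 2)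

def sg (x y : ZMod 2) : ZMod 3 := if x = 1 ∧ y = 1 then -1 else 1

def bits (i : Fin 4) : ZMod 2 × ZMod 2 :=
  (![(0,0),(0,1),(1,0),(1,1)] : Fin 4 → ZMod 2 × ZMod 2) i

/-- Pauli matrices on two qubits. -/
def pauli (a b c d : ZMod 2) : Mat := Matrix.of fun i j =>
  if bits i = ((bits j).1 + a, (bits j).2 + c) then sg b (bits j).1 * sg d (bits j).2 else 0

lemma pauli_mem : ∀ a b c d, (pauli a b c d)ᵀ * pauli a b c d = 1 := by decide +kernel

lemma pauli_mul : ∀ a b c d a' b' c' d',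
    pauli (a + a') (b + b') (c + c') (d + d') = pauli a b c d * pauli a' b' c' d' ∨
    pauli (a + a') (b + b') (c + c') (d + d') = -(pauli a b c d * pauli a' b' c' d') := by
  decide +kernel

lemma pauli_center : ∀ a b c d, (∀ a' b' c' d',
    pauli a' b' c' d' * pauli a b c d = pauli a b c d * pauli a' b' c' d') →
    a = 0 ∧ b = 0 ∧ c = 0 ∧ d = 0 := by decide +kernel

lemma pauli_ker1 : ∀ a b c d, ∀ i, pc (pauli a b c d *ᵥ pr i) = i := by decide +kernel
lemma pauli_ker2 : ∀ a b c d, ∀ i, qc (pauli a b c d *ᵥ qr i) = i := by decide +kernel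

lemma neg_one_mem : (-1 : Mat)ᵀ * (-1) = 1 := by decide +kernel

def m1 : G := ⟨-1, (mem_iff _).2 neg_one_mem⟩

lemma m1_center : m1 ∈ Subgroup.center G := by
  rw [Subgroup.mem_center_iff]
  intro g
  apply Subtype.ext
  change g.1 * (-1) = (-1) * g.1
  simp

def pg (a b c d : ZMod 2) : G := ⟨pauli a b c d, (mem_iff _).2 (pauli_mem a b c d)⟩

lemma pg_ker (a b c d : ZMod 2) : φ (pg a b c d) = 1 :=
  Prod.ext (Equiv.ext fun i => pauli_ker1 a b c d i) (Equiv.ext fun i => pauli_ker2 a b c d i)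

abbrev P := G ⧸ Subgroup.center G

lemma mk_eq (x y : G) (h : x.1 = y.1 ∨ x.1 = -y.1) :
    (QuotientGroup.mk x : P) = QuotientGroup.mk y := by
  rcases h with h | h
  · rw [Subtype.ext h]
  · have : x = y * m1 := Subtype.ext (by
      change x.1 = y.1 * (-1)
      rw [h]; simp)
    rw [this, QuotientGroup.mk_mul_of_mem _ m1_center]

def f : E →* P := MonoidHom.mk'
  (fun e => QuotientGroup.mk
    (pg (e 0).toAdd (e 1).toAdd (e 2).toAdd (e 3).toAdd))
  (fun e e' => by
    rw [← QuotientGroup.mk_mul]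
    exact mk_eq _ _ (pauli_mul _ _ _ _ _ _ _ _))

lemma f_inj : Function.Injective f := by
  rw [injective_iff_map_eq_one]
  intro e he
  have h : pg (e 0).toAdd (e 1).toAdd (e 2).toAdd (e 3).toAdd ∈ Subgroup.center G :=
    (QuotientGroup.eq_one_iff _).1 he
  rw [Subgroup.mem_center_iff] at h
  obtain ⟨h0, h1, h2, h3⟩ := pauli_center _ _ _ _ fun a b c d => congrArg Subtype.val (h (pg a b c d))
  funext i
  fin_cases i
  · exact h0
  · exact h1
  · exact h2
  · exact h3

/-- Signed unit vectors. -/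
def su (x : Fin 4 × Bool) : V := fun i => if i = x.1 then (if x.2 then 1 else -1) else 0

lemma su_of (v : V) : v ⬝ᵥ v = 1 → pc v = 0 → ∃ x, v = su x := by
  revert v
  refine forallV _ ?_
  decide +kernel

def ofCols (x y z w : Fin 4 × Bool) : Mat := Matrix.of fun i j =>
  (![su x, su y, su z, su w] : Fin 4 → V) j i

set_option synthInstance.maxHeartbeats 400000 in
set_option synthInstance.maxSize 4000 in
lemma classify : ∀ x y, su x ⬝ᵥ su y = 0 → ∀ z, su x ⬝ᵥ su z = 0 → su y ⬝ᵥ su z = 0 →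
    ∀ w, su x ⬝ᵥ su w = 0 → su y ⬝ᵥ su w = 0 → su z ⬝ᵥ su w = 0 →
    pc (ofCols x y z w *ᵥ pr 1) = 1 →
    qc (ofCols x y z w *ᵥ qr 0) = 0 → qc (ofCols x y z w *ᵥ qr 1) = 1 →
    ∃ a b c d, ofCols x y z w = pauli a b c d ∨ ofCols x y z w = -pauli a b c d := by
  decide +kernel

lemma ker_sub (M : G) (hM : φ M = 1) :
    ∃ a b c d, M.1 = pauli a b c d ∨ M.1 = -pauli a b c d := by
  have hp : ∀ i : ZMod 3, pc (M.1 *ᵥ pr i) = i := fun i =>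
    congrFun (congrArg DFunLike.coe (congrArg Prod.fst hM)) i
  have hq : ∀ i : ZMod 3, qc (M.1 *ᵥ qr i) = i := fun i =>
    congrFun (congrArg DFunLike.coe (congrArg Prod.snd hM)) i
  have e1 : ∀ j : Fin 4, (Pi.single j 1 : V) ⬝ᵥ Pi.single j 1 = 1 := by decide +kernel
  have e2 : ∀ j k : Fin 4, j ≠ k → (Pi.single j 1 : V) ⬝ᵥ Pi.single k 1 = 0 := by decide +kernel
  have e3 : ∀ j : Fin 4, pc (Pi.single j 1 : V) = pc (pr 0) := by decide +kernel
  have hc : ∀ j : Fin 4, ∃ x, M.1 *ᵥ Pi.single j 1 = su x := by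
    intro j
    apply su_of
    · rw [dot_pres, e1]
    · rw [← hp 0]
      exact PC.pres M _ _ (e1 j) (PC.h1 0) (e3 j)
  choose x hx using hc
  have ho : ∀ j k : Fin 4, j ≠ k → su (x j) ⬝ᵥ su (x k) = 0 := by
    intro j k hjk
    rw [← hx, ← hx, dot_pres, e2 j k hjk]
  have hMM : M.1 = ofCols (x 0) (x 1) (x 2) (x 3) := by
    ext i j
    have h : M.1 i j = su (x j) i := by
      rw [← hx]; simp
    rw [h]
    fin_cases j <;> rfl
  have := classify (x 0) (x 1) (ho _ _ (by decide)) (x 2) (ho _ _ (by decide)) (ho _ _ (by decide))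
    (x 3) (ho _ _ (by decide)) (ho _ _ (by decide)) (ho _ _ (by decide))
  rw [← hMM] at this
  exact this (hp 1) (hq 0) (hq 1)

def φb : P →* Equiv.Perm (Fin 3) × Equiv.Perm (Fin 3) :=
  QuotientGroup.lift _ φ center_le

def s : Equiv.Perm (Fin 3) × Equiv.Perm (Fin 3) →* P := (QuotientGroup.mk' _).comp ψ

lemma φbs (x) : φb (s x) = x := φψ x

lemma f_range : f.range = φb.ker := by
  ext y
  constructor
  · rintro ⟨e, rfl⟩
    exact pg_ker _ _ _ _
  · intro hy
    induction y using QuotientGroup.induction_on with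
    | H M =>
      obtain ⟨a, b, c, d, h⟩ := ker_sub M hy
      exact ⟨fun i => Multiplicative.ofAdd ((![a, b, c, d] : Fin 4 → ZMod 2) i),
        (mk_eq M (pg a b c d) h).symm⟩

end PGOAux

/-- `PGO₄⁺(3)` is an internal semidirect product `(C₂)⁴ ⋊ (𝔖₃ × 𝔖₃)`: it has a normal
subgroup `N ≅ (ℤ/2ℤ)⁴` and a subgroup `H ≅ 𝔖₃ × 𝔖₃` with `N ⊓ H = ⊥` and `N ⊔ H = ⊤`. -/
theorem PGO4_plus_3_semidirect_product :
    ∃ (N H : Subgroup ((Matrix.orthogonalGroup (Fin 4) (ZMod 3)) ⧸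
        Subgroup.center (Matrix.orthogonalGroup (Fin 4) (ZMod 3)))),
      N.Normal ∧
      Nonempty (N ≃* (Fin 4 → Multiplicative (ZMod 2))) ∧
      Nonempty (H ≃* Equiv.Perm (Fin 3) × Equiv.Perm (Fin 3)) ∧
      N ⊓ H = ⊥ ∧ N ⊔ H = ⊤ := by
  refine ⟨PGOAux.φb.ker, PGOAux.s.range, inferInstance, ?_, ?_, ?_, ?_⟩
  · rw [← PGOAux.f_range]
    exact ⟨(MonoidHom.ofInjective PGOAux.f_inj).symm⟩
  · exact ⟨(MonoidHom.ofInjective (Function.LeftInverse.injective PGOAux.φbs)).symm⟩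
  · rw [eq_bot_iff]
    rintro y ⟨hy, x, rfl⟩
    have h : PGOAux.φb (PGOAux.s x) = 1 := hy
    rw [PGOAux.φbs] at h
    rw [h, map_one]
    exact Subgroup.one_mem _
  · rw [eq_top_iff]
    intro y _
    have h : y = (y * (PGOAux.s (PGOAux.φb y))⁻¹) * PGOAux.s (PGOAux.φb y) := by simp
    rw [h]
    refine Subgroup.mul_mem_sup ?_ ⟨_, rfl⟩
    rw [MonoidHom.mem_ker, map_mul, map_inv, PGOAux.φbs, mul_inv_cancel]
end

section
/- Let P = PGO₄⁺(3) be the quotient of GO₄⁺(3) (the group of 4×4 matrices M over 𝔽₃ with Mᵀ·M = 1) by its center. Then there exists a normal subgroup N of P isomorphic to (ℤ/2ℤ)⁴ such that every nontrivial normal subgroup of P contains N; that is, the socle of PGO₄⁺(3) is isomorphic to (C₂)⁴ and is contained in every nontrivial normal subgroup. -/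
attribute [local instance] starRingOfComm

namespace Socle

/-- Three-element type used as a fast model of `ZMod 3`. -/
inductive T | z | p | m

def T.mul : T → T → T
  | .z, _ => .z
  | .p, y => y
  | .m, .z => .z
  | .m, .p => .m
  | .m, .m => .p

def T.add : T → T → T
  | .z, y => y
  | .p, .z => .p
  | .p, .p => .m
  | .p, .m => .z
  | .m, .z => .m
  | .m, .p => .z
  | .m, .m => .p

def T.neg : T → T
  | .z => .z
  | .p => .m
  | .m => .p

def T.beq : T → T → Bool
  | .z, .z => true
  | .p, .p => true
  | .m, .m => true
  | _, _ => false

def T.e : T → ZMod 3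
  | .z => 0
  | .p => 1
  | .m => -1

structure Q (α : Type) where
  (a b c d : α)

abbrev Row := Q T
abbrev M4 := Q Row

def dot (x y : Row) : T :=
  ((x.a.mul y.a).add (x.b.mul y.b)).add ((x.c.mul y.c).add (x.d.mul y.d))

def beqR (x y : Row) : Bool := x.a.beq y.a && x.b.beq y.b && x.c.beq y.c && x.d.beq y.d
def beqM (x y : M4) : Bool := beqR x.a y.a && beqR x.b y.b && beqR x.c y.c && beqR x.d y.d
def negR (x : Row) : Row := ⟨x.a.neg, x.b.neg, x.c.neg, x.d.neg⟩
def negM (x : M4) : M4 := ⟨negR x.a, negR x.b, negR x.c, negR x.d⟩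
def tr (x : M4) : M4 :=
  ⟨⟨x.a.a, x.b.a, x.c.a, x.d.a⟩, ⟨x.a.b, x.b.b, x.c.b, x.d.b⟩,
   ⟨x.a.c, x.b.c, x.c.c, x.d.c⟩, ⟨x.a.d, x.b.d, x.c.d, x.d.d⟩⟩
/-- `x * yᵀ` -/
def mulT (x y : M4) : M4 :=
  ⟨⟨dot x.a y.a, dot x.a y.b, dot x.a y.c, dot x.a y.d⟩,
   ⟨dot x.b y.a, dot x.b y.b, dot x.b y.c, dot x.b y.d⟩,
   ⟨dot x.c y.a, dot x.c y.b, dot x.c y.c, dot x.c y.d⟩,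
   ⟨dot x.d y.a, dot x.d y.b, dot x.d y.c, dot x.d y.d⟩⟩
def mul (x y : M4) : M4 := mulT x (tr y)

def I4 : M4 := ⟨⟨.p,.z,.z,.z⟩,⟨.z,.p,.z,.z⟩,⟨.z,.z,.p,.z⟩,⟨.z,.z,.z,.p⟩⟩
def Li : M4 := ⟨⟨.z,.m,.z,.z⟩,⟨.p,.z,.z,.z⟩,⟨.z,.z,.z,.m⟩,⟨.z,.z,.p,.z⟩⟩
def Lj : M4 := ⟨⟨.z,.z,.m,.z⟩,⟨.z,.z,.z,.p⟩,⟨.p,.z,.z,.z⟩,⟨.z,.m,.z,.z⟩⟩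
def Ri : M4 := ⟨⟨.z,.m,.z,.z⟩,⟨.p,.z,.z,.z⟩,⟨.z,.z,.z,.p⟩,⟨.z,.z,.m,.z⟩⟩
def Rj : M4 := ⟨⟨.z,.z,.m,.z⟩,⟨.z,.z,.z,.m⟩,⟨.p,.z,.z,.z⟩,⟨.z,.p,.z,.z⟩⟩
/-- left multiplication by `1 + i + j + k` -/
def Om : M4 := ⟨⟨.p,.m,.m,.m⟩,⟨.p,.p,.m,.p⟩,⟨.p,.p,.p,.m⟩,⟨.p,.m,.p,.p⟩⟩
/-- quaternion conjugation -/
def Sw : M4 := ⟨⟨.p,.z,.z,.z⟩,⟨.z,.m,.z,.z⟩,⟨.z,.z,.m,.z⟩,⟨.z,.z,.z,.m⟩⟩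

def F : Bool → Bool → Bool → Bool → M4
  | false, false, false, false => ⟨⟨.p,.z,.z,.z⟩,⟨.z,.p,.z,.z⟩,⟨.z,.z,.p,.z⟩,⟨.z,.z,.z,.p⟩⟩
  | false, false, false, true => ⟨⟨.z,.z,.m,.z⟩,⟨.z,.z,.z,.m⟩,⟨.p,.z,.z,.z⟩,⟨.z,.p,.z,.z⟩⟩
  | false, false, true, false => ⟨⟨.z,.m,.z,.z⟩,⟨.p,.z,.z,.z⟩,⟨.z,.z,.z,.p⟩,⟨.z,.z,.m,.z⟩⟩
  | false, false, true, true => ⟨⟨.z,.z,.z,.p⟩,⟨.z,.z,.m,.z⟩,⟨.z,.p,.z,.z⟩,⟨.m,.z,.z,.z⟩⟩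
  | false, true, false, false => ⟨⟨.z,.z,.m,.z⟩,⟨.z,.z,.z,.p⟩,⟨.p,.z,.z,.z⟩,⟨.z,.m,.z,.z⟩⟩
  | false, true, false, true => ⟨⟨.m,.z,.z,.z⟩,⟨.z,.p,.z,.z⟩,⟨.z,.z,.m,.z⟩,⟨.z,.z,.z,.p⟩⟩
  | false, true, true, false => ⟨⟨.z,.z,.z,.m⟩,⟨.z,.z,.m,.z⟩,⟨.z,.m,.z,.z⟩,⟨.m,.z,.z,.z⟩⟩
  | false, true, true, true => ⟨⟨.z,.m,.z,.z⟩,⟨.m,.z,.z,.z⟩,⟨.z,.z,.z,.p⟩,⟨.z,.z,.p,.z⟩⟩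
  | true, false, false, false => ⟨⟨.z,.m,.z,.z⟩,⟨.p,.z,.z,.z⟩,⟨.z,.z,.z,.m⟩,⟨.z,.z,.p,.z⟩⟩
  | true, false, false, true => ⟨⟨.z,.z,.z,.p⟩,⟨.z,.z,.m,.z⟩,⟨.z,.m,.z,.z⟩,⟨.p,.z,.z,.z⟩⟩
  | true, false, true, false => ⟨⟨.m,.z,.z,.z⟩,⟨.z,.m,.z,.z⟩,⟨.z,.z,.p,.z⟩,⟨.z,.z,.z,.p⟩⟩
  | true, false, true, true => ⟨⟨.z,.z,.p,.z⟩,⟨.z,.z,.z,.p⟩,⟨.p,.z,.z,.z⟩,⟨.z,.p,.z,.z⟩⟩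
  | true, true, false, false => ⟨⟨.z,.z,.z,.m⟩,⟨.z,.z,.m,.z⟩,⟨.z,.p,.z,.z⟩,⟨.p,.z,.z,.z⟩⟩
  | true, true, false, true => ⟨⟨.z,.m,.z,.z⟩,⟨.m,.z,.z,.z⟩,⟨.z,.z,.z,.m⟩,⟨.z,.z,.m,.z⟩⟩
  | true, true, true, false => ⟨⟨.z,.z,.p,.z⟩,⟨.z,.z,.z,.m⟩,⟨.p,.z,.z,.z⟩,⟨.z,.m,.z,.z⟩⟩
  | true, true, true, true => ⟨⟨.p,.z,.z,.z⟩,⟨.z,.m,.z,.z⟩,⟨.z,.z,.m,.z⟩,⟨.z,.z,.z,.p⟩⟩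

def allT (f : T → Bool) : Bool := f .z && f .p && f .m
def allRow (f : Row → Bool) : Bool :=
  allT fun a => allT fun b => allT fun c => allT fun d =>
    !((dot ⟨a,b,c,d⟩ ⟨a,b,c,d⟩).beq .p) || f ⟨a,b,c,d⟩
def anyB (f : Bool → Bool) : Bool := f false || f true
def pm (x y : M4) : Bool := beqM x y || beqM x (negM y)
def memN (x : M4) : Bool :=
  anyB fun a => anyB fun b => anyB fun c => anyB fun d => pm x (F a b c d)
def comm (g n : M4) : Bool := pm (mul g n) (mul n g)

def fT (t : T) (k : T → Bool) : Bool :=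
  match t with
  | .z => k .z
  | .p => k .p
  | .m => k .m
def fR (r : Row) (k : Row → Bool) : Bool :=
  fT r.a fun a => fT r.b fun b => fT r.c fun c => fT r.d fun d => k ⟨a, b, c, d⟩
/-- Evaluate a matrix before passing it on. -/
def fM (x : M4) (k : M4 → Bool) : Bool :=
  fR x.a fun a => fR x.b fun b => fR x.c fun c => fR x.d fun d => k ⟨a, b, c, d⟩

def conjN (g n : M4) : Bool := fM (mul g n) fun x => fM (mulT x g) fun y => memN y

def chk (g : M4) : Bool :=
  conjN g Li &&
  (!(comm g Li && comm g Lj && comm g Ri && comm g Rj) || memN g)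

def allOrth (f : M4 → Bool) : Bool :=
  allRow fun r0 => allRow fun r1 => !((dot r0 r1).beq .z) ||
    allRow fun r2 => !((dot r0 r2).beq .z && (dot r1 r2).beq .z) ||
      allRow fun r3 => !((dot r0 r3).beq .z && (dot r1 r3).beq .z && (dot r2 r3).beq .z) ||
        f ⟨r0, r1, r2, r3⟩

theorem e_mul (x y : T) : (x.mul y).e = x.e * y.e := by cases x <;> cases y <;> decide
theorem e_add (x y : T) : (x.add y).e = x.e + y.e := by cases x <;> cases y <;> decide
theorem e_neg (x : T) : x.neg.e = - x.e := by cases x <;> decide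
theorem e_inj : Function.Injective T.e := by
  intro x y h; revert h; cases x <;> cases y <;> first | exact fun _ => rfl | exact fun h => absurd h (by decide)
theorem e_surj (x : ZMod 3) : ∃ t : T, t.e = x := by
  revert x
  have h : ∀ x : ZMod 3, T.e .z = x ∨ T.e .p = x ∨ T.e .m = x := by decide
  intro x
  rcases h x with h | h | h
  exacts [⟨_, h⟩, ⟨_, h⟩, ⟨_, h⟩]
theorem beq_iff (x y : T) : x.beq y = true ↔ x = y := by cases x <;> cases y <;> simp [T.beq]
theorem beqR_iff (x y : Row) : beqR x y = true ↔ x = y := by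
  cases x; cases y; simp [beqR, beq_iff, and_assoc]
theorem beqM_iff (x y : M4) : beqM x y = true ↔ x = y := by
  cases x; cases y; simp [beqM, beqR_iff, and_assoc]
theorem pm_iff (x y : M4) : pm x y = true ↔ x = y ∨ x = negM y := by simp [pm, beqM_iff]

def Mx (x : M4) : Matrix (Fin 4) (Fin 4) (ZMod 3) :=
  !![x.a.a.e, x.a.b.e, x.a.c.e, x.a.d.e; x.b.a.e, x.b.b.e, x.b.c.e, x.b.d.e;
     x.c.a.e, x.c.b.e, x.c.c.e, x.c.d.e; x.d.a.e, x.d.b.e, x.d.c.e, x.d.d.e]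

theorem Mx_inj : Function.Injective Mx := by
  rintro ⟨⟨_,_,_,_⟩,⟨_,_,_,_⟩,⟨_,_,_,_⟩,⟨_,_,_,_⟩⟩ ⟨⟨_,_,_,_⟩,⟨_,_,_,_⟩,⟨_,_,_,_⟩,⟨_,_,_,_⟩⟩ h
  have h' := fun i j => congrFun (congrFun h i) j
  simp only [Fin.forall_fin_succ] at h'
  simp [Mx, e_inj.eq_iff] at h'
  simp [h']

theorem Mx_surj (A : Matrix (Fin 4) (Fin 4) (ZMod 3)) : ∃ x, Mx x = A := by
  choose f hf using fun i j => e_surj (A i j)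
  refine ⟨⟨⟨f 0 0, f 0 1, f 0 2, f 0 3⟩, ⟨f 1 0, f 1 1, f 1 2, f 1 3⟩,
    ⟨f 2 0, f 2 1, f 2 2, f 2 3⟩, ⟨f 3 0, f 3 1, f 3 2, f 3 3⟩⟩, ?_⟩
  ext i j
  fin_cases i <;> fin_cases j <;> simp [Mx, hf]

theorem Mx_tr (x : M4) : Mx (tr x) = (Mx x).transpose := by
  ext i j
  fin_cases i <;> fin_cases j <;> rfl
theorem Mx_neg (x : M4) : Mx (negM x) = - (Mx x) := by
  ext i j
  fin_cases i <;> fin_cases j <;> simp [Mx, negM, negR, e_neg]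
theorem tr_tr (x : M4) : tr (tr x) = x := rfl
theorem e_dot (x y : Row) :
    (dot x y).e = x.a.e * y.a.e + x.b.e * y.b.e + x.c.e * y.c.e + x.d.e * y.d.e := by
  simp only [dot, e_add, e_mul, add_assoc]
theorem Mx_mulT (x y : M4) : Mx (mulT x y) = Mx x * (Mx y).transpose := by
  ext i j
  rw [Matrix.mul_apply, Fin.sum_univ_four]
  fin_cases i <;> fin_cases j <;> exact e_dot _ _
theorem Mx_mul (x y : M4) : Mx (mul x y) = Mx x * Mx y := by
  rw [mul, Mx_mulT, Mx_tr, Matrix.transpose_transpose]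
theorem Mx_one : Mx I4 = 1 := by
  ext i j
  fin_cases i <;> fin_cases j <;> rfl

theorem allT_spec {f : T → Bool} (h : allT f = true) (t : T) : f t = true := by
  simp only [allT, Bool.and_eq_true] at h
  cases t <;> simp [h]
theorem allRow_spec {f : Row → Bool} (h : allRow f = true) (r : Row) (hr : dot r r = .p) :
    f r = true := by
  have := allT_spec (allT_spec (allT_spec (allT_spec h r.a) r.b) r.c) r.d
  have hr' : dot ⟨r.a, r.b, r.c, r.d⟩ ⟨r.a, r.b, r.c, r.d⟩ = .p := hr
  rw [hr'] at this
  exact this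
theorem allOrth_spec {f : M4 → Bool} (h : allOrth f = true) (x : M4) (hx : mulT x x = I4) :
    f x = true := by
  obtain ⟨r0, r1, r2, r3⟩ := x
  simp only [mulT, I4, Q.mk.injEq] at hx
  obtain ⟨⟨h00, h01, h02, h03⟩, ⟨-, h11, h12, h13⟩, ⟨-, -, h22, h23⟩, ⟨-, -, -, h33⟩⟩ := hx
  unfold allOrth at h
  have k := allRow_spec h r0 h00
  have k := allRow_spec k r1 h11
  simp only [h01, T.beq, Bool.not_true, Bool.false_or] at k
  have k := allRow_spec k r2 h22
  simp only [h02, h12, T.beq, Bool.and_self, Bool.not_true, Bool.false_or] at k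
  have k := allRow_spec k r3 h33
  simp only [h03, h13, h23, T.beq, Bool.and_self, Bool.not_true, Bool.false_or] at k
  exact k

theorem fT_eq (t : T) (k) : fT t k = k t := by cases t <;> rfl
theorem fR_eq (t : Row) (k) : fR t k = k t := by simp [fR, fT_eq]
theorem fM_eq (t : M4) (k) : fM t k = k t := by simp [fM, fR_eq]

theorem anyB_spec {f : Bool → Bool} (h : anyB f = true) : ∃ a, f a = true := by
  rw [anyB, Bool.or_eq_true] at h
  rcases h with h | h
  exacts [⟨_, h⟩, ⟨_, h⟩]
theorem memN_spec {x : M4} (h : memN x = true) :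
    ∃ a b c d, x = F a b c d ∨ x = negM (F a b c d) := by
  obtain ⟨a, h⟩ := anyB_spec h
  obtain ⟨b, h⟩ := anyB_spec h
  obtain ⟨c, h⟩ := anyB_spec h
  obtain ⟨d, h⟩ := anyB_spec h
  exact ⟨a, b, c, d, (pm_iff _ _).1 h⟩

abbrev G := Matrix.orthogonalGroup (Fin 4) (ZMod 3)
abbrev P := G ⧸ Subgroup.center G

def El (x : M4) (h : mulT x x = I4) : G :=
  ⟨Mx x, by rw [Matrix.mem_orthogonalGroup_iff, ← Mx_mulT, h, Mx_one]⟩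

theorem El_surj (g : G) : ∃ x h, El x h = g := by
  obtain ⟨x, hx⟩ := Mx_surj g.1
  have h := (Matrix.mem_orthogonalGroup_iff _ _).1 g.2
  refine ⟨x, Mx_inj ?_, Subtype.ext hx⟩
  rw [Mx_mulT, hx, Mx_one, h]

theorem mulT_mul {x y : M4} (hx : mulT x x = I4) (hy : mulT y y = I4) :
    mulT (mul x y) (mul x y) = I4 := by
  apply Mx_inj
  have h1 := congrArg Mx hx
  have h2 := congrArg Mx hy
  rw [Mx_mulT, Mx_one] at h1 h2
  rw [Mx_mulT, Mx_mul, Matrix.transpose_mul, Mx_one, Matrix.mul_assoc, ← Matrix.mul_assoc (Mx y),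
    h2, Matrix.one_mul, h1]

theorem El_mul {x y : M4} (hx : mulT x x = I4) (hy : mulT y y = I4) :
    El x hx * El y hy = El (mul x y) (mulT_mul hx hy) :=
  Subtype.ext (Mx_mul x y).symm

theorem El_eq {x y : M4} {hx hy} (h : El x hx = El y hy) : x = y :=
  Mx_inj (congrArg Subtype.val h)

theorem F_orth (a b c d : Bool) : mulT (F a b c d) (F a b c d) = I4 := by
  rw [← beqM_iff]; revert a b c d; decide
theorem Om_orth : mulT Om Om = I4 := by rw [← beqM_iff]; decide
theorem Sw_orth : mulT Sw Sw = I4 := by rw [← beqM_iff]; decide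

/-- the class in `P` -/
def cl (x : M4) (h : mulT x x = I4) : P := QuotientGroup.mk (El x h)

theorem cl_mul {x y : M4} (hx : mulT x x = I4) (hy : mulT y y = I4) :
    cl x hx * cl y hy = cl (mul x y) (mulT_mul hx hy) := by
  rw [cl, cl, cl, ← El_mul]; rfl

theorem cl_pm {x y : M4} {hx hy} (h : pm x y = true) : cl x hx = cl y hy := by
  rcases (pm_iff _ _).1 h with rfl | rfl
  · rfl
  · symm
    rw [cl, cl, QuotientGroup.eq, Subgroup.mem_center_iff]
    have : (El y hy)⁻¹ * El (negM y) hx = -1 := by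
      rw [inv_mul_eq_iff_eq_mul]
      apply Subtype.ext
      rw [mul_neg, mul_one]
      exact Mx_neg y
    rw [this]
    intro g
    simp

def f4 (a b c d : Bool) : P := cl (F a b c d) (F_orth a b c d)

theorem f4_mul (a b c d a' b' c' d' : Bool) :
    f4 a b c d * f4 a' b' c' d' = f4 (a ^^ a') (b ^^ b') (c ^^ c') (d ^^ d') := by
  rw [f4, f4, f4, cl_mul]
  apply cl_pm
  revert a b c d a' b' c' d'
  decide +kernel

theorem chk_all : allOrth chk = true := by decide +kernel

theorem comm_mem {x : M4} (hx : mulT x x = I4) (h : ∀ a b c d, comm x (F a b c d) = true) :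
    ∃ a b c d, cl x hx = f4 a b c d := by
  have := allOrth_spec chk_all x hx
  have h1 : comm x Li = true := h true false false false
  have h2 : comm x Lj = true := h false true false false
  have h3 : comm x Ri = true := h false false true false
  have h4 : comm x Rj = true := h false false false true
  simp only [chk, h1, h2, h3, h4, Bool.and_eq_true] at this
  obtain ⟨a, b, c, d, h⟩ := memN_spec this.2
  exact ⟨a, b, c, d, cl_pm ((pm_iff _ _).2 h)⟩

/-- The center consists of `±1`. -/
theorem center_pm {x : M4} (hx : mulT x x = I4) (h : El x hx ∈ Subgroup.center G) :
    pm x I4 = true := by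
  rw [Subgroup.mem_center_iff] at h
  have hc : ∀ a b c d, mul (F a b c d) x = mul x (F a b c d) := by
    intro a b c d
    have := h (El _ (F_orth a b c d))
    rw [El_mul, El_mul] at this
    exact El_eq this
  have := allOrth_spec chk_all x hx
  have hh : ∀ a b c d, comm x (F a b c d) = true := fun a b c d => by
    rw [comm, pm_iff]; exact Or.inl (hc a b c d).symm
  have h1 : comm x Li = true := hh true false false false
  have h2 : comm x Lj = true := hh false true false false
  have h3 : comm x Ri = true := hh false false true false
  have h4 : comm x Rj = true := hh false false false true
  simp only [chk, h1, h2, h3, h4, Bool.and_eq_true] at this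
  obtain ⟨a, b, c, d, hm⟩ := memN_spec this.2
  have key : ∀ s a b c d : Bool,
      (∀ a' b' c' d', beqM (mul (F a' b' c' d') (bif s then F a b c d else negM (F a b c d)))
        (mul (bif s then F a b c d else negM (F a b c d)) (F a' b' c' d')) = true) →
      pm (bif s then F a b c d else negM (F a b c d)) I4 = true := by
    decide +kernel
  rcases hm with rfl | rfl
  · exact key true a b c d fun a' b' c' d' => (beqM_iff _ _).2 (hc a' b' c' d')
  · exact key false a b c d fun a' b' c' d' => (beqM_iff _ _).2 (hc a' b' c' d')

theorem cl_eq {x y : M4} {hx hy} (h : cl x hx = cl y hy) : pm y x = true := by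
  rw [cl, cl, QuotientGroup.eq] at h
  obtain ⟨z, hz, e⟩ := El_surj ((El x hx)⁻¹ * El y hy)
  rw [← e] at h
  have hp := center_pm hz h
  rw [eq_inv_mul_iff_mul_eq, El_mul] at e
  have e := El_eq e
  rw [pm_iff] at hp ⊢
  rcases hp with rfl | rfl
  · left; rw [← e]; apply Mx_inj; simp [Mx_mul, Mx_one]
  · right; rw [← e]; apply Mx_inj; simp [Mx_mul, Mx_one, Mx_neg]

theorem cl_one : cl I4 (F_orth false false false false) = 1 := by
  have : El I4 (F_orth false false false false) = 1 := Subtype.ext Mx_one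
  unfold cl
  rw [this]; rfl

theorem f4_zero : f4 false false false false = 1 := cl_one

theorem f4_inj {a b c d : Bool} (h : f4 a b c d = 1) :
    a = false ∧ b = false ∧ c = false ∧ d = false := by
  rw [← f4_zero] at h
  have := cl_eq h
  revert a b c d
  have key : ∀ a b c d : Bool, pm (F false false false false) (F a b c d) = true →
    a = false ∧ b = false ∧ c = false ∧ d = false := by decide +kernel
  intro a b c d _ h
  exact key a b c d h

def bit (x : Multiplicative (ZMod 2)) : Bool := decide (x ≠ 1)
theorem bit_mul : ∀ x y, bit (x * y) = (bit x ^^ bit y) := by decide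
theorem bit_one : ∀ x, bit x = false → x = 1 := by decide
theorem bit_surj : ∀ b, ∃ x, bit x = b := by decide

def f : (Fin 4 → Multiplicative (ZMod 2)) →* P where
  toFun v := f4 (bit (v 0)) (bit (v 1)) (bit (v 2)) (bit (v 3))
  map_one' := f4_zero
  map_mul' v w := by simp only [Pi.mul_apply, bit_mul, f4_mul]

theorem f_inj : Function.Injective f := by
  rw [injective_iff_map_eq_one]
  intro v h
  obtain ⟨h0, h1, h2, h3⟩ := f4_inj h
  funext i
  fin_cases i
  exacts [bit_one _ h0, bit_one _ h1, bit_one _ h2, bit_one _ h3]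

theorem mem_range (x : P) : x ∈ f.range ↔ ∃ a b c d, x = f4 a b c d := by
  constructor
  · rintro ⟨v, rfl⟩; exact ⟨_, _, _, _, rfl⟩
  · rintro ⟨a, b, c, d, rfl⟩
    obtain ⟨a, rfl⟩ := bit_surj a
    obtain ⟨b, rfl⟩ := bit_surj b
    obtain ⟨c, rfl⟩ := bit_surj c
    obtain ⟨d, rfl⟩ := bit_surj d
    exact ⟨![a, b, c, d], rfl⟩

theorem P_surj (x : P) : ∃ y h, cl y h = x := by
  obtain ⟨g, rfl⟩ := QuotientGroup.mk_surjective x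
  obtain ⟨y, h, rfl⟩ := El_surj g
  exact ⟨y, h, rfl⟩

def om : P := cl Om Om_orth
def sw : P := cl Sw Sw_orth

theorem om_conj (a b c d : Bool) :
    om * f4 a b c d * om⁻¹ = f4 b (a ^^ b) c d := by
  rw [mul_inv_eq_iff_eq_mul, om, f4, f4, cl_mul, cl_mul]
  apply cl_pm
  revert a b c d
  decide +kernel

theorem sw_conj (a b c d : Bool) :
    sw * f4 a b c d * sw⁻¹ = f4 c d a b := by
  rw [mul_inv_eq_iff_eq_mul, sw, f4, f4, cl_mul, cl_mul]
  apply cl_pm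
  revert a b c d
  decide +kernel

theorem conj_Li (x : P) : x * f4 true false false false * x⁻¹ ∈ f.range := by
  obtain ⟨y, h, rfl⟩ := P_surj x
  have := allOrth_spec chk_all y h
  simp only [chk, Bool.and_eq_true, conjN, fM_eq] at this
  obtain ⟨a, b, c, d, hm⟩ := memN_spec this.1
  rw [mem_range]
  refine ⟨a, b, c, d, ?_⟩
  rw [mul_inv_eq_iff_eq_mul, f4, f4, cl_mul, cl_mul]
  apply cl_pm
  have hy := congrArg Mx h
  rw [Mx_mulT, Mx_one] at hy
  have hy' : (Mx y).transpose * Mx y = 1 := mul_eq_one_comm.1 hy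
  have e : mul (mulT (mul y Li) y) y = mul y Li := by
    apply Mx_inj
    rw [Mx_mul, Mx_mulT, Matrix.mul_assoc, hy', Matrix.mul_one]
  rw [pm_iff]
  change mul y Li = _ ∨ mul y Li = _
  rw [← e]
  rcases hm with hm | hm
  · left; rw [hm]
  · right; rw [hm]; apply Mx_inj; simp [Mx_mul, Mx_neg]

theorem f_normal : f.range.Normal := by
  constructor
  have step : ∀ (w : P) (n : P), (∀ x, x * n * x⁻¹ ∈ f.range) →
      ∀ x, x * (w * n * w⁻¹) * x⁻¹ ∈ f.range := by
    intro w n h x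
    have := h (x * w)
    rwa [mul_inv_rev, show x * w * n * (w⁻¹ * x⁻¹) = x * (w * n * w⁻¹) * x⁻¹ by group] at this
  have stepm : ∀ (m : P) (n : P), (∀ x, x * m * x⁻¹ ∈ f.range) → (∀ x, x * n * x⁻¹ ∈ f.range) →
      ∀ x, x * (m * n) * x⁻¹ ∈ f.range := by
    intro m n hm hn x
    have := f.range.mul_mem (hm x) (hn x)
    rwa [show x * m * x⁻¹ * (x * n * x⁻¹) = x * (m * n) * x⁻¹ by group] at this
  have h1 := conj_Li
  have h2 := step om _ h1
  rw [om_conj] at h2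
  have h2 := step om _ h2
  rw [om_conj] at h2
  have key : ∀ a b, ∀ x, x * f4 a b false false * x⁻¹ ∈ f.range := by
    intro a b
    cases a <;> cases b
    · intro x; rw [f4_zero]; simp [f.range.one_mem]
    · exact step om _ h1 |> fun h => by rw [om_conj] at h; exact h
    · exact h1
    · exact h2
  have all : ∀ a b c d, ∀ x, x * f4 a b c d * x⁻¹ ∈ f.range := by
    intro a b c d
    have h := step sw _ (key c d)
    rw [sw_conj] at h
    have h := stepm _ _ (key a b) h
    rw [f4_mul] at h
    simpa using h
  intro n hn x
  obtain ⟨a, b, c, d, rfl⟩ := (mem_range _).1 hn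
  exact all a b c d x

theorem full_of_V1 (K : Subgroup P) [hK : K.Normal] {a b : Bool} (hab : (a || b) = true)
    (h : f4 a b false false ∈ K) : f.range ≤ K := by
  have o : ∀ {a b c d}, f4 a b c d ∈ K → f4 b (a ^^ b) c d ∈ K := fun {a b c d} h => by
    rw [← om_conj]; exact hK.conj_mem _ h _
  have s : ∀ {a b c d}, f4 a b c d ∈ K → f4 c d a b ∈ K := fun {a b c d} h => by
    rw [← sw_conj]; exact hK.conj_mem _ h _
  have key : ∀ a b, f4 a b false false ∈ K := by
    have h0 : f4 false false false false ∈ K := by rw [f4_zero]; exact K.one_mem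
    have h' := o h
    have h'' := o h'
    intro a' b'
    revert h h' h'' hab
    cases a <;> cases b <;> cases a' <;> cases b' <;> intro hab h h' h'' <;>
      first | exact h0 | exact h | exact h' | exact h'' | cases hab
  intro n hn
  obtain ⟨a, b, c, d, rfl⟩ := (mem_range _).1 hn
  have := K.mul_mem (key a b) (s (key c d))
  rw [f4_mul] at this
  simpa using this

theorem full_of_ne (K : Subgroup P) [hK : K.Normal] {a b c d : Bool} (h : f4 a b c d ∈ K)
    (hne : f4 a b c d ≠ 1) : f.range ≤ K := by
  have main : ∀ {a b c d}, f4 a b c d ∈ K → (a || b) = true → f.range ≤ K := by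
    intro a b c d h hab
    have h2 := K.mul_mem h (hK.conj_mem _ h om)
    rw [om_conj, f4_mul] at h2
    simp only [Bool.xor_self] at h2
    refine full_of_V1 K ?_ h2
    revert hab; cases a <;> cases b <;> decide
  by_cases hab : (a || b) = true
  · exact main h hab
  · have h2 := hK.conj_mem _ h sw
    rw [sw_conj] at h2
    refine main h2 ?_
    by_contra hcd
    simp only [Bool.or_eq_true, not_or, Bool.not_eq_true] at hab hcd
    exact hne (by rw [hab.1, hab.2, hcd.1, hcd.2, f4_zero])

theorem le_of_normal (K : Subgroup P) (hK : K.Normal) (hne : K ≠ ⊥) : f.range ≤ K := by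
  obtain ⟨x, hx, hx1⟩ := K.bot_or_exists_ne_one.resolve_left hne
  by_cases hc : ∀ a b c d, x * f4 a b c d * x⁻¹ * (f4 a b c d)⁻¹ = 1
  · obtain ⟨y, h, rfl⟩ := P_surj x
    obtain ⟨a, b, c, d, e⟩ := comm_mem h (by
      intro a b c d
      have := hc a b c d
      rw [mul_inv_eq_one, mul_inv_eq_iff_eq_mul, f4, cl_mul, cl_mul] at this
      exact cl_eq this.symm)
    rw [e] at hx hx1
    exact full_of_ne K hx hx1
  · push Not at hc
    obtain ⟨a, b, c, d, hc⟩ := hc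
    have hm : f4 a b c d ∈ f.range := (mem_range _).2 ⟨_, _, _, _, rfl⟩
    have h1 : x * f4 a b c d * x⁻¹ * (f4 a b c d)⁻¹ ∈ f.range :=
      f.range.mul_mem (f_normal.conj_mem _ hm _) (f.range.inv_mem hm)
    have h2 : x * f4 a b c d * x⁻¹ * (f4 a b c d)⁻¹ ∈ K := by
      have := K.mul_mem hx (hK.conj_mem _ (K.inv_mem hx) (f4 a b c d))
      simpa only [mul_assoc] using this
    obtain ⟨a', b', c', d', e⟩ := (mem_range _).1 h1
    rw [e] at h2 hc
    exact full_of_ne K h2 hc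

end Socle

/-- The socle of `PGO₄⁺(3)`: there is a normal subgroup `N ≅ (ℤ/2ℤ)⁴` of `PGO₄⁺(3)`
contained in every nontrivial normal subgroup. -/
theorem PGO4_plus_3_socle :
    ∃ N : Subgroup ((Matrix.orthogonalGroup (Fin 4) (ZMod 3)) ⧸
        Subgroup.center (Matrix.orthogonalGroup (Fin 4) (ZMod 3))),
      N.Normal ∧
      Nonempty (N ≃* (Fin 4 → Multiplicative (ZMod 2))) ∧
      ∀ K : Subgroup ((Matrix.orthogonalGroup (Fin 4) (ZMod 3)) ⧸
          Subgroup.center (Matrix.orthogonalGroup (Fin 4) (ZMod 3))),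
        K.Normal → K ≠ ⊥ → N ≤ K := by
  exact ⟨Socle.f.range, Socle.f_normal, ⟨(MonoidHom.ofInjective Socle.f_inj).symm⟩,
    Socle.le_of_normal⟩
end
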